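/- Let C ⊂ ℙ²(ℂ) be the cuspidal cubic defined by x³ − y²z = 0, whose unique singular point is the cusp (0:0:1), and let C⁰ = C \ {(0:0:1)}. Then the map φ : ℂ → C⁰ given by φ(s) = (s : 1 : s³) is a bijection, and for all pairwise distinct s, t, u ∈ ℂ, the three points φ(s), φ(t), φ(u) are collinear if and only if s + t + u = 0. (Thus the collinearity relation makes C⁰ a group isomorphic to the additive group ℂ.) -/

import Mathlib

/-- The complex projective plane ℙ²(ℂ) = ℙ(ℂ³). -/
abbrev P2 : Type := Projectivization ℂ (Fin 3 → ℂ)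

/-- Three points of ℙ²(ℂ) are collinear if representative vectors in ℂ³ span a linear
subspace of dimension at most 2. -/
def Collin (p q r : P2) : Prop :=
  Module.finrank ℂ (Submodule.span ℂ {p.rep, q.rep, r.rep} : Submodule ℂ (Fin 3 → ℂ)) ≤ 2

lemma vec_ne_zero {a b c : ℂ} (h : a ≠ 0 ∨ b ≠ 0 ∨ c ≠ 0) : ![a, b, c] ≠ 0 := by
  intro hz
  rcases h with h | h | h
  · exact h (by simpa using congrFun hz 0)
  · exact h (by simpa using congrFun hz 1)
  · exact h (by simpa using congrFun hz 2)

/-- The cuspidal cubic x³ − y²z = 0 in ℙ²(ℂ). -/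
def cuspCubic : Set P2 := {p | p.rep 0 ^ 3 - p.rep 1 ^ 2 * p.rep 2 = 0}

/-- The cusp (0:0:1) of the cuspidal cubic. -/
noncomputable def cuspPt : P2 :=
  Projectivization.mk ℂ ![0, 0, 1] (vec_ne_zero (Or.inr (Or.inr one_ne_zero)))

/-- The parametrization φ(s) = (s : 1 : s³) of the smooth points of the cuspidal cubic. -/
noncomputable def cuspParam (s : ℂ) : P2 :=
  Projectivization.mk ℂ ![s, 1, s ^ 3] (vec_ne_zero (Or.inr (Or.inl one_ne_zero)))

lemma cuspParam_rep (s : ℂ) : ∃ a : ℂ, a ≠ 0 ∧ (cuspParam s).rep = ![a * s, a, a * s ^ 3] := by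
  obtain ⟨a, ha⟩ := Projectivization.exists_smul_eq_mk_rep ℂ ![s, 1, s ^ 3]
    (vec_ne_zero (Or.inr (Or.inl one_ne_zero)))
  refine ⟨a, a.ne_zero, ?_⟩
  unfold cuspParam
  rw [← ha]
  ext i
  fin_cases i <;> simp [Units.smul_def]

lemma collin_iff_det (p q r : P2) :
    Collin p q r ↔ (Matrix.of ![p.rep, q.rep, r.rep]).det = 0 := by
  have h1 : LinearIndependent ℂ ![p.rep, q.rep, r.rep] ↔
      (Matrix.of ![p.rep, q.rep, r.rep]).det ≠ 0 := by
    rw [← isUnit_iff_ne_zero, ← Matrix.isUnit_iff_isUnit_det,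
      ← Matrix.linearIndependent_rows_iff_isUnit]
    rfl
  have h2 : Set.range ![p.rep, q.rep, r.rep] = {p.rep, q.rep, r.rep} := by
    simp only [Matrix.range_cons, Matrix.range_empty, Set.union_empty, Set.singleton_union]
  rw [← not_iff_not, ← ne_eq (Matrix.det _), ← h1, linearIndependent_iff_card_le_finrank_span]
  unfold Collin Set.finrank
  rw [h2]
  simp only [Fintype.card_fin, ne_eq, not_le]
  rfl

/-- φ(s) = (s : 1 : s³) is a bijection of ℂ onto the set of smooth points
of the cuspidal cubic x³ − y²z = 0, and for pairwise distinct s, t, u the points φ s,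
φ t, φ u are collinear iff s + t + u = 0. -/
theorem cuspidal_cubic_group_law :
    Function.Injective cuspParam ∧ Set.range cuspParam = cuspCubic \ {cuspPt} ∧
      ∀ s t u : ℂ, s ≠ t → s ≠ u → t ≠ u →
        (Collin (cuspParam s) (cuspParam t) (cuspParam u) ↔ s + t + u = 0) := by
  refine ⟨?_, ?_, ?_⟩
  · intro s t h
    obtain ⟨a, ha, hs⟩ := cuspParam_rep s
    obtain ⟨b, hb, ht⟩ := cuspParam_rep t
    rw [h, ht] at hs
    have h0 : b * t = a * s := by simpa using congrFun hs 0
    have h1 : b = a := by simpa using congrFun hs 1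
    subst h1
    exact (mul_left_cancel₀ hb h0).symm
  · ext p
    constructor
    · rintro ⟨s, rfl⟩
      obtain ⟨a, ha, hs⟩ := cuspParam_rep s
      refine ⟨?_, ?_⟩
      · simp only [cuspCubic, Set.mem_setOf_eq, hs]
        simp
        ring
      · intro h
        obtain ⟨b, hb⟩ := Projectivization.exists_smul_eq_mk_rep ℂ ![0, 0, 1]
          (vec_ne_zero (Or.inr (Or.inr one_ne_zero)))
        have h' : cuspParam s = cuspPt := h
        rw [h'] at hs
        unfold cuspPt at hs
        rw [← hb] at hs
        have h1 := congrFun hs 1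
        simp [Units.smul_def] at h1
        exact ha h1.symm
    · rintro ⟨hp, hne⟩
      have hp' : p.rep 0 ^ 3 - p.rep 1 ^ 2 * p.rep 2 = 0 := hp
      have hy : p.rep 1 ≠ 0 := by
        intro hy
        apply hne
        have hx : p.rep 0 = 0 := by simpa [hy] using hp'
        change p = cuspPt
        rw [← p.mk_rep]
        unfold cuspPt
        rw [Projectivization.mk_eq_mk_iff']
        refine ⟨p.rep 2, ?_⟩
        ext i
        fin_cases i <;> simp [hx, hy]
      refine ⟨p.rep 0 / p.rep 1, ?_⟩
      conv_rhs => rw [← p.mk_rep]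
      unfold cuspParam
      rw [Projectivization.mk_eq_mk_iff']
      refine ⟨(p.rep 1)⁻¹, ?_⟩
      ext i
      fin_cases i
      · simp; field_simp
      · simp [hy]
      · simp
        field_simp
        linear_combination -hp'
  · intro s t u hst hsu htu
    rw [collin_iff_det]
    obtain ⟨a, ha, hs⟩ := cuspParam_rep s
    obtain ⟨b, hb, ht⟩ := cuspParam_rep t
    obtain ⟨c, hc, hu⟩ := cuspParam_rep u
    rw [hs, ht, hu, Matrix.det_fin_three]
    have key : a * b * c * (s - t) * (s - u) * (t - u) ≠ 0 := by
      simp [ha, hb, hc, sub_ne_zero, hst, hsu, htu]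
    constructor
    · intro h
      apply (mul_eq_zero.mp (?_ : a * b * c * (s - t) * (s - u) * (t - u) * (s + t + u) = 0)).resolve_left key
      simp at h
      linear_combination h
    · intro h
      simp
      linear_combination (a * b * c * (s - t) * (s - u) * (t - u)) * h
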